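/- Let γ ≥ 1, s < 0, μ, k > 0, and let 0 < P⁻ < P⁺ be the two positive roots of f(P) = P^γ − C₁ + C₂/P, where C₁ = ((P⁺)^{γ+1} − (P⁻)^{γ+1})/(P⁺ − P⁻) and C₂ = P⁺P⁻·((P⁺)^γ − (P⁻)^γ)/(P⁺ − P⁻). Define F(P) = P^{γ+1}/(γ+1) − C₁P + C₂·ln P and F̃₁(ξ) = F(ξ) − (sμξ/k)² − F(P⁺). If F̃₁(ξ) ≤ 0 for all 0 < ξ < P⁻, then there exists a heteroclinic solution (P, Q̃) : ℝ → (0,∞) × ℝ of the system P' = (2/k²)Q̃, Q̃' = f(P) − (2μs/k²)Q̃ + (2/k²)Q̃²/P with (P, Q̃)(y) → (P⁻, 0) as y → −∞ and (P, Q̃)(y) → (P⁺, 0) as y → +∞. If in addition −sμ/k < √(−2f'(P⁻)), then the profile P is non-monotone on ℝ. -/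

import Mathlib

open Filter Topology

/-!
With `P = exp u` and `(2 / k²) Q̃ = P v` the quadratic term of the profile system cancels, and
`u` solves `u'' = g(u) + a u'` with `a = -2sμ/k² > 0` and `g(u) = (2 / k²) f(exp u) exp(-u)`: a
negatively damped oscillator, along which the energy `E = v² / 2 + ∫_u^p g`, `p = log P⁺`, is
nondecreasing. Shooting over the initial velocity gives an orbit which stays between the two rest
points with `E ≤ 0` for all positive times, hence `E < 0` throughout. Since `g` is positive and
bounded below near `-∞`, its potential wall confines the orbit to a bounded interval for negative
times as well. The rate `a v²` of the energy must die out at both ends, so the orbit converges to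
rest points there; negative energy excludes the saddle `(p, 0)` at `-∞`.

If the characteristic roots at `m = log P⁻` are not real, the ratio `v / (u - m)` satisfies a
Riccati equation whose solutions blow up in finite backward time, so `u` cannot remain above `m`.
-/

section IntegralCurves

variable {E E' : Type*} [NormedAddCommGroup E] [NormedSpace ℝ E] [PseudoMetricSpace E']
  {X : E → E} {K : NNReal} {γ : ℝ → E}

theorem exists_uniform_time_of_lipschitzWith [CompleteSpace E] (hX : LipschitzWith K X) :
    ∃ T > 0, ∀ x₀, ∃ α : ℝ → E, α 0 = x₀ ∧
      ∀ t ∈ Set.Ioo (-T) T, HasDerivAt α (X (α t)) t := by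
  set T : ℝ := 1 / (2 * (K + 1)) with hT
  have hTpos : 0 < T := by positivity
  have hKT : K * T ≤ 1 / 2 := by
    rw [hT, mul_one_div, div_le_div_iff₀ (by positivity) two_pos]
    linarith
  refine ⟨T, hTpos, fun x₀ => ?_⟩
  set r : NNReal := 2 * ‖X x₀‖₊ * ⟨T, hTpos.le⟩
  have hpl : IsPicardLindelof (fun _ => X) (tmin := -T) (tmax := T)
      ⟨0, by constructor <;> linarith⟩ x₀ r 0 (‖X x₀‖₊ + K * r) K := by
    refine ⟨fun _ _ => hX.lipschitzOnWith, fun _ _ => continuousOn_const, fun _ _ x hx => ?_, ?_⟩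
    · have hdist : ‖X x - X x₀‖ ≤ K * r :=
        (hX.norm_sub_le x x₀).trans (by gcongr; exact mem_closedBall_iff_norm.1 hx)
      have htri := norm_le_norm_add_norm_sub' (X x) (X x₀)
      push_cast
      linarith
    · have hrT : (r : ℝ) = 2 * ‖X x₀‖ * T := rfl
      have : (K * T) * r ≤ 1 / 2 * r := by gcongr
      simp only [sub_zero, zero_sub, neg_neg, max_self, NNReal.coe_zero]
      push_cast
      linarith
  obtain ⟨α, hα₀, hα⟩ := hpl.exists_eq_forall_mem_Icc_hasDerivWithinAt₀
  exact ⟨α, hα₀, fun t ht =>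
    (hα t (Set.Ioo_subset_Icc_self ht)).hasDerivAt (Icc_mem_nhds ht.1 ht.2)⟩

theorem exists_hasDerivAt_Ioo_of_eqOn_Ioo {α β : ℝ → E} {a b c d : ℝ} (hbc : b < c)
    (hα : ∀ t ∈ Set.Ioo a c, HasDerivAt α (X (α t)) t)
    (hβ : ∀ t ∈ Set.Ioo b d, HasDerivAt β (X (β t)) t) (hαβ : Set.EqOn α β (Set.Ioo b c)) :
    ∃ γ : ℝ → E, Set.EqOn γ α (Set.Ioo a c) ∧ Set.EqOn γ β (Set.Ioo b d) ∧
      ∀ t ∈ Set.Ioo a d, HasDerivAt γ (X (γ t)) t := by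
  obtain ⟨m, hbm, hmc⟩ := exists_between hbc
  set γ : ℝ → E := fun t => if t < m then α t else β t
  have hγα : Set.EqOn γ α (Set.Ioo a c) := fun t ht => by
    rcases lt_or_ge t m with htm | hmt
    · exact if_pos htm
    · exact (if_neg hmt.not_gt).trans (hαβ ⟨hbm.trans_le hmt, ht.2⟩).symm
  have hγβ : Set.EqOn γ β (Set.Ioo b d) := fun t ht => by
    rcases lt_or_ge t m with htm | hmt
    · exact (if_pos htm).trans (hαβ ⟨ht.1, htm.trans hmc⟩)
    · exact if_neg hmt.not_gt
  refine ⟨γ, hγα, hγβ, fun t ht => ?_⟩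
  rcases lt_or_ge t c with htc | hct
  · have htα : t ∈ Set.Ioo a c := ⟨ht.1, htc⟩
    rw [hγα htα]
    exact (hα t htα).congr_of_eventuallyEq (hγα.eventuallyEq_of_mem (Ioo_mem_nhds htα.1 htα.2))
  · have htβ : t ∈ Set.Ioo b d := ⟨hbc.trans_le hct, ht.2⟩
    rw [hγβ htβ]
    exact (hβ t htβ).congr_of_eventuallyEq (hγβ.eventuallyEq_of_mem (Ioo_mem_nhds htβ.1 htβ.2))

-- Restarting at `T / 2` and at `-T / 2` prolongs the given solution by `T / 2` on either side.
theorem exists_hasDerivAt_Ioo_three_halves_mul (hX : LipschitzWith K X) {T : ℝ} (hT : 0 < T)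
    (h : ∀ x₀, ∃ α : ℝ → E, α 0 = x₀ ∧ ∀ t ∈ Set.Ioo (-T) T, HasDerivAt α (X (α t)) t) (x₀ : E) :
    ∃ α : ℝ → E, α 0 = x₀ ∧
      ∀ t ∈ Set.Ioo (-(3 / 2 * T)) (3 / 2 * T), HasDerivAt α (X (α t)) t := by
  choose φ hφ₀ hφ using h
  set x := φ x₀
  set y : ℝ → E := fun t => φ (x (T / 2)) (t - T / 2) with hy
  set z : ℝ → E := fun t => φ (x (-(T / 2))) (t + T / 2) with hz
  have hy' : ∀ t ∈ Set.Ioo (-(T / 2)) (3 / 2 * T), HasDerivAt y (X (y t)) t := fun t ht =>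
    (hφ _ (t - T / 2) ⟨by linarith [ht.1], by linarith [ht.2]⟩).comp_sub_const t (T / 2)
  have hz' : ∀ t ∈ Set.Ioo (-(3 / 2 * T)) (T / 2), HasDerivAt z (X (z t)) t := fun t ht =>
    (hφ _ (t + T / 2) ⟨by linarith [ht.1], by linarith [ht.2]⟩).comp_add_const t (T / 2)
  have hxy : Set.EqOn x y (Set.Ioo (-(T / 2)) T) :=
    ODE_solution_unique_of_mem_Ioo (v := fun _ => X) (s := fun _ => Set.univ) (t₀ := T / 2)
      (fun _ _ => hX.lipschitzOnWith) ⟨by linarith, by linarith⟩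
      (fun t ht => ⟨hφ _ t ⟨by linarith [ht.1], ht.2⟩, trivial⟩)
      (fun t ht => ⟨hy' t ⟨ht.1, by linarith [ht.2]⟩, trivial⟩) (by simp [hy, hφ₀])
  have hxz : Set.EqOn x z (Set.Ioo (-T) (T / 2)) :=
    ODE_solution_unique_of_mem_Ioo (v := fun _ => X) (s := fun _ => Set.univ) (t₀ := -(T / 2))
      (fun _ _ => hX.lipschitzOnWith) ⟨by linarith, by linarith⟩
      (fun t ht => ⟨hφ _ t ⟨ht.1, by linarith [ht.2]⟩, trivial⟩)
      (fun t ht => ⟨hz' t ⟨by linarith [ht.1], ht.2⟩, trivial⟩) (by simp [hz, hφ₀])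
  obtain ⟨w, hwx, -, hw⟩ := exists_hasDerivAt_Ioo_of_eqOn_Ioo (by linarith) (hφ x₀) hy' hxy
  obtain ⟨α, -, hαw, hα⟩ := exists_hasDerivAt_Ioo_of_eqOn_Ioo (by linarith) hz' hw
    fun t ht => (hxz ht).symm.trans (hwx ⟨ht.1, by linarith [ht.2]⟩).symm
  refine ⟨α, ?_, hα⟩
  rw [hαw ⟨by linarith, by linarith⟩, hwx ⟨by linarith, hT⟩, hφ₀]

theorem exists_hasDerivAt_Ioo_of_lipschitzWith [CompleteSpace E] (hX : LipschitzWith K X) (T : ℝ)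
    (x₀ : E) :
    ∃ α : ℝ → E, α 0 = x₀ ∧ ∀ t ∈ Set.Ioo (-T) T, HasDerivAt α (X (α t)) t := by
  obtain ⟨ε, hε, hsol⟩ := exists_uniform_time_of_lipschitzWith hX
  have hpow : ∀ n : ℕ, ∀ x₀, ∃ α : ℝ → E, α 0 = x₀ ∧
      ∀ t ∈ Set.Ioo (-((3 / 2) ^ n * ε)) ((3 / 2) ^ n * ε), HasDerivAt α (X (α t)) t := by
    intro n
    induction n with
    | zero => simpa using hsol
    | succ n ih =>
      simp only [pow_succ', mul_assoc]
      exact exists_hasDerivAt_Ioo_three_halves_mul hX (by positivity) ih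
  obtain ⟨n, hn⟩ := pow_unbounded_of_one_lt (T / ε) (show (1 : ℝ) < 3 / 2 by norm_num)
  have hT : T ≤ (3 / 2) ^ n * ε := ((div_lt_iff₀ hε).1 hn).le
  obtain ⟨α, hα₀, hα⟩ := hpow n x₀
  exact ⟨α, hα₀, fun t ht => hα t ⟨by linarith [ht.1], by linarith [ht.2]⟩⟩

theorem exists_isIntegralCurve_of_lipschitzWith [CompleteSpace E] (hX : LipschitzWith K X)
    (x₀ : E) : ∃ γ : ℝ → E, γ 0 = x₀ ∧ IsIntegralCurve γ fun _ => X := by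
  choose φ hφ₀ hφ using fun T => exists_hasDerivAt_Ioo_of_lipschitzWith hX T x₀
  have hunique : ∀ {S T t : ℝ}, |t| < S → |t| < T → φ S t = φ T t := by
    intro S T t hS hT
    have hpos : 0 < min S T := (abs_nonneg t).trans_lt (lt_min hS hT)
    have hIoo : ∀ {R}, min S T ≤ R → ∀ s ∈ Set.Ioo (-min S T) (min S T),
        HasDerivAt (φ R) (X (φ R s)) s ∧ φ R s ∈ Set.univ := fun hR s hs =>
      ⟨hφ _ s ⟨by linarith [hs.1], by linarith [hs.2]⟩, trivial⟩
    exact ODE_solution_unique_of_mem_Ioo (v := fun _ => X) (s := fun _ => Set.univ) (t₀ := 0)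
      (fun _ _ => hX.lipschitzOnWith) ⟨by linarith, hpos⟩ (hIoo (min_le_left _ _))
      (hIoo (min_le_right _ _)) (by rw [hφ₀, hφ₀]) (abs_lt.1 (lt_min hS hT))
  refine ⟨fun t => φ (|t| + 1) t, hφ₀ _, fun t => ?_⟩
  have ht : |t| < |t| + 1 := lt_add_one _
  refine (hφ (|t| + 1) t (abs_lt.1 ht)).congr_of_eventuallyEq ?_
  filter_upwards [continuous_abs.continuousAt.eventually (gt_mem_nhds ht)] with s hs
  exact hunique (lt_add_one _) hs

theorem continuous_integralCurve_apply {ι : Type*} [TopologicalSpace ι] (hX : LipschitzWith K X)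
    {γ : ι → ℝ → E} (hγ : ∀ c, IsIntegralCurve (γ c) fun _ => X) {s t : ℝ} (hst : s ≤ t)
    (hs : Continuous fun c => γ c s) : Continuous fun c => γ c t := by
  have hcont : ∀ c, Continuous (γ c) := fun c =>
    continuous_iff_continuousAt.2 fun r => (hγ c r).continuousAt
  have hgronwall : ∀ c d, dist (γ c t) (γ d t) ≤ dist (γ c s) (γ d s) * Real.exp (K * (t - s)) :=
    fun c d => dist_le_of_trajectories_ODE (v := fun _ => X) (fun _ => hX) (hcont c).continuousOn
      (fun r _ => (hγ c r).hasDerivWithinAt) (hcont d).continuousOn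
      (fun r _ => (hγ d r).hasDerivWithinAt) le_rfl t ⟨hst, le_rfl⟩
  refine continuous_iff_continuousAt.2 fun d => tendsto_iff_dist_tendsto_zero.2 ?_
  refine squeeze_zero (fun _ => dist_nonneg) (fun c => hgronwall c d) ?_
  simpa using (tendsto_iff_dist_tendsto_zero.1 (hs.tendsto d)).mul_const (Real.exp (K * (t - s)))

/-- Barbalat's lemma. -/
theorem tendsto_zero_of_hasDerivAt_of_uniformContinuous {f f' : ℝ → E} {l : E}
    (hf : ∀ t, HasDerivAt f (f' t) t) (hf' : UniformContinuous f')
    (hl : Tendsto f atTop (𝓝 l)) : Tendsto f' atTop (𝓝 0) := by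
  refine Metric.tendsto_nhds.2 fun ε hε => ?_
  obtain ⟨δ, hδ, hclose⟩ := Metric.uniformContinuous_iff.1 hf' (ε / 2) (half_pos hε)
  set d := δ / 2 with hd
  have hdpos : 0 < d := half_pos hδ
  have hmean : ∀ t, ‖f (t + d) - f t - d • f' t‖ ≤ ε / 2 * d := by
    intro t
    have hbound := (convex_Icc t (t + d)).norm_image_sub_le_of_norm_hasDerivWithin_le
      (f := fun r => f r - r • f' t) (f' := fun r => f' r - (1 : ℝ) • f' t) (C := ε / 2)
      (fun r _ => ((hf r).sub ((hasDerivAt_id r).smul_const (f' t))).hasDerivWithinAt)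
      (fun r hr => by
        rw [one_smul, ← dist_eq_norm]
        refine (hclose ?_).le
        rw [Real.dist_eq, abs_of_nonneg (by linarith [hr.1])]
        linarith [hr.2])
      (Set.left_mem_Icc.2 (by linarith)) (Set.right_mem_Icc.2 (by linarith))
    rw [add_sub_cancel_left, Real.norm_of_nonneg hdpos.le] at hbound
    convert hbound using 2
    module
  have hincr : Tendsto (fun t => f (t + d) - f t) atTop (𝓝 0) := by
    simpa using (hl.comp (tendsto_atTop_add_const_right _ d tendsto_id)).sub hl
  filter_upwards [Metric.tendsto_nhds.1 hincr (ε / 2 * d) (by positivity)] with t ht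
  rw [dist_zero_right] at ht ⊢
  have hsmul : d * ‖f' t‖ < ε * d := by
    have htri := norm_sub_norm_le (d • f' t) (f (t + d) - f t)
    rw [norm_sub_rev (d • f' t), norm_smul, Real.norm_of_nonneg hdpos.le] at htri
    linarith [hmean t]
  nlinarith

theorem uniformContinuous_comp_of_mem_isCompact (hγ : IsIntegralCurve γ fun _ => X) {S : Set E}
    (hS : IsCompact S) (hX : ContinuousOn X S) (hmem : ∀ t, γ t ∈ S) {F : E → E'}
    (hF : ContinuousOn F S) : UniformContinuous (F ∘ γ) := by
  obtain ⟨C, hC⟩ := hS.exists_bound_of_continuousOn hX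
  have hlip : LipschitzWith C.toNNReal γ := lipschitzWith_of_nnnorm_deriv_le
    (fun t => (hγ t).differentiableAt) fun t => by
      rw [(hγ t).deriv, ← NNReal.coe_le_coe, coe_nnnorm]
      exact (hC _ (hmem t)).trans (Real.le_coe_toNNReal C)
  have hFS := uniformContinuousOn_iff_restrict.1 (hS.uniformContinuousOn_of_continuous hF)
  exact hFS.comp (hlip.uniformContinuous.subtype_mk hmem)

/-- A form of the LaSalle invariance principle. -/
theorem tendsto_deriv_comp_zero_of_mem_isCompact (hγ : IsIntegralCurve γ fun _ => X) {S : Set E}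
    (hS : IsCompact S) (hX : ContinuousOn X S) (hmem : ∀ t, γ t ∈ S) {L D : E → ℝ}
    (hL : ContinuousOn L S) (hD : ContinuousOn D S)
    (hderiv : ∀ t, HasDerivAt (L ∘ γ) (D (γ t)) t) (hD₀ : ∀ t, 0 ≤ D (γ t)) :
    Tendsto (D ∘ γ) atTop (𝓝 0) := by
  obtain ⟨C, hC⟩ := hS.exists_bound_of_continuousOn hL
  have hmono : Monotone (L ∘ γ) := monotone_of_hasDerivAt_nonneg hderiv hD₀
  have hbdd : BddAbove (Set.range (L ∘ γ)) :=
    ⟨C, Set.forall_mem_range.2 fun t => (le_abs_self _).trans (hC _ (hmem t))⟩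
  exact tendsto_zero_of_hasDerivAt_of_uniformContinuous hderiv
    (uniformContinuous_comp_of_mem_isCompact hγ hS hX hmem hD) (tendsto_atTop_ciSup hmono hbdd)

end IntegralCurves

/-- The phase-plane vector field of the oscillator `u'' = h(u) + a u'` in the variables
`(u, v) = (u, u')`; it is damped for `a < 0` and negatively damped for `a > 0`. -/
def oscillatorField (h : ℝ → ℝ) (a : ℝ) (x : ℝ × ℝ) : ℝ × ℝ :=
  (x.2, h x.1 + a * x.2)

/-- `(u, v)` is a trajectory of `oscillatorField h a`, defined for all times. -/
structure IsOscillation (h : ℝ → ℝ) (a : ℝ) (u v : ℝ → ℝ) : Prop where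
  hasDerivAt_fst : ∀ y, HasDerivAt u (v y) y
  hasDerivAt_snd : ∀ y, HasDerivAt v (h (u y) + a * v y) y

/-- The energy of `u'' = h(u) + a u'`, with the primitive of `h` normalised so that the energy
vanishes at the rest point `(p, 0)`. -/
noncomputable def oscillatorEnergy (h : ℝ → ℝ) (p : ℝ) (x : ℝ × ℝ) : ℝ :=
  x.2 ^ 2 / 2 + ∫ t in x.1..p, h t

section Oscillator

variable {h g : ℝ → ℝ} {a m p : ℝ} {K : NNReal} {u v : ℝ → ℝ} {I : Set ℝ}

theorem lipschitzOnWith_oscillatorField (hh : LipschitzOnWith K h I) (a : ℝ) :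
    LipschitzOnWith (max 1 (K + ‖a‖₊)) (oscillatorField h a) (I ×ˢ Set.univ) := by
  have hfst : LipschitzOnWith K (fun x : ℝ × ℝ => h x.1) (I ×ˢ Set.univ) :=
    mul_one K ▸ hh.comp LipschitzWith.prod_fst.lipschitzOnWith fun x hx => hx.1
  have hsnd : LipschitzWith ‖a‖₊ fun x : ℝ × ℝ => a * x.2 :=
    mul_one ‖a‖₊ ▸ (lipschitzWith_smul a).comp LipschitzWith.prod_snd
  exact LipschitzWith.prod_snd.lipschitzOnWith.prodMk (hfst.add hsnd.lipschitzOnWith)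

theorem lipschitzWith_oscillatorField (hh : LipschitzWith K h) (a : ℝ) :
    LipschitzWith (max 1 (K + ‖a‖₊)) (oscillatorField h a) := by
  simpa [lipschitzOnWith_univ] using lipschitzOnWith_oscillatorField (I := Set.univ)
    hh.lipschitzOnWith a

theorem isOscillation_iff_isIntegralCurve :
    IsOscillation h a u v ↔ IsIntegralCurve (fun y => (u y, v y)) fun _ => oscillatorField h a :=
  ⟨fun H y => (H.hasDerivAt_fst y).prodMk (H.hasDerivAt_snd y),
    fun H => ⟨fun y => (H y).fst, fun y => (H y).snd⟩⟩

theorem exists_isOscillation (hh : LipschitzWith K h) (a u₀ v₀ : ℝ) :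
    ∃ u v, u 0 = u₀ ∧ v 0 = v₀ ∧ IsOscillation h a u v := by
  obtain ⟨γ, hγ₀, hγ⟩ :=
    exists_isIntegralCurve_of_lipschitzWith (lipschitzWith_oscillatorField hh a) (u₀, v₀)
  exact ⟨fun y => (γ y).1, fun y => (γ y).2, congrArg Prod.fst hγ₀, congrArg Prod.snd hγ₀,
    isOscillation_iff_isIntegralCurve.2 hγ⟩

theorem continuous_oscillatorEnergy (hh : Continuous h) (p : ℝ) :
    Continuous (oscillatorEnergy h p) := by
  have hint : Continuous fun x : ℝ => ∫ t in x..p, h t := by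
    simp only [intervalIntegral.integral_symm p]
    exact (intervalIntegral.continuous_primitive (fun _ _ => hh.intervalIntegrable _ _) p).neg
  exact ((continuous_snd.pow 2).div_const 2).add (hint.comp continuous_fst)

namespace IsOscillation

theorem continuous_fst (H : IsOscillation h a u v) : Continuous u :=
  continuous_iff_continuousAt.2 fun y => (H.hasDerivAt_fst y).continuousAt

theorem continuous_snd (H : IsOscillation h a u v) : Continuous v :=
  continuous_iff_continuousAt.2 fun y => (H.hasDerivAt_snd y).continuousAt

theorem congr (H : IsOscillation h a u v) (hgh : ∀ y, g (u y) = h (u y)) :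
    IsOscillation g a u v :=
  ⟨H.hasDerivAt_fst, fun y => by simpa only [hgh] using H.hasDerivAt_snd y⟩

theorem comp_neg (H : IsOscillation h a u v) :
    IsOscillation h (-a) (fun y => u (-y)) fun y => -v (-y) where
  hasDerivAt_fst y := by
    simpa [Function.comp_def] using (H.hasDerivAt_fst (-y)).scomp y (hasDerivAt_neg y)
  hasDerivAt_snd y := by
    refine ((H.hasDerivAt_snd (-y)).scomp y (hasDerivAt_neg y)).neg.congr_deriv ?_
    simp

theorem eq_const_of_eq_zero (H : IsOscillation h a u v) (hh : LipschitzOnWith K h I)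
    (hu : ∀ y, u y ∈ I) (hm : h m = 0) {t : ℝ} (hut : u t = m) (hvt : v t = 0) (y : ℝ) :
    u y = m := by
  have hrest : IsOscillation h a (fun _ => m) fun _ => 0 :=
    ⟨fun _ => hasDerivAt_const _ m, fun _ => by simpa [hm] using hasDerivAt_const _ (0 : ℝ)⟩
  have heq : (fun y => (u y, v y)) = fun _ => (m, 0) :=
    ODE_solution_unique_univ (v := fun _ => oscillatorField h a) (s := fun _ => I ×ˢ Set.univ)
      (t₀ := t) (fun _ => lipschitzOnWith_oscillatorField hh a)
      (fun y => ⟨isOscillation_iff_isIntegralCurve.1 H y, hu y, trivial⟩)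
      (fun y => ⟨isOscillation_iff_isIntegralCurve.1 hrest y, hut ▸ hu t, trivial⟩)
      (by simp [hut, hvt])
  exact congrArg Prod.fst (congrFun heq y)

theorem eqOn_Ici {u' v' : ℝ → ℝ} (H : IsOscillation h a u v) (H' : IsOscillation g a u' v')
    (hh : LipschitzWith K h) {t : ℝ} (hgh : ∀ y ≥ t, g (u' y) = h (u' y)) (hu : u t = u' t)
    (hv : v t = v' t) {y : ℝ} (hy : t ≤ y) : u y = u' y ∧ v y = v' y := by
  have heq : Set.EqOn (fun y => (u y, v y)) (fun y => (u' y, v' y)) (Set.Icc t y) :=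
    ODE_solution_unique (v := fun _ => oscillatorField h a)
      (fun _ => lipschitzWith_oscillatorField hh a)
      (H.continuous_fst.prodMk H.continuous_snd).continuousOn
      (fun s _ => (isOscillation_iff_isIntegralCurve.1 H s).hasDerivWithinAt)
      (H'.continuous_fst.prodMk H'.continuous_snd).continuousOn
      (fun s hs => by
        have hderiv := (isOscillation_iff_isIntegralCurve.1 H' s).hasDerivWithinAt
          (s := Set.Ici s)
        simpa only [oscillatorField, hgh s hs.1] using hderiv)
      (by simp [hu, hv])
  exact Prod.mk_inj.1 (heq ⟨hy, le_rfl⟩)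

theorem hasDerivAt_energy (H : IsOscillation h a u v) (hh : Continuous h) (p y : ℝ) :
    HasDerivAt (fun y => oscillatorEnergy h p (u y, v y)) (a * v y ^ 2) y := by
  have hint : HasDerivAt (fun x => ∫ t in x..p, h t) (-h (u y)) (u y) :=
    intervalIntegral.integral_hasDerivAt_left (hh.intervalIntegrable _ _)
      (hh.stronglyMeasurableAtFilter _ _) hh.continuousAt
  refine ((((H.hasDerivAt_snd y).pow 2).div_const 2).add
    (hint.comp y (H.hasDerivAt_fst y))).congr_deriv ?_
  ring

theorem monotone_energy (H : IsOscillation h a u v) (hh : Continuous h) (ha : 0 ≤ a) (p : ℝ) :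
    Monotone fun y => oscillatorEnergy h p (u y, v y) :=
  monotone_of_hasDerivAt_nonneg (H.hasDerivAt_energy hh p) fun y => by positivity

theorem energy_lt_energy (H : IsOscillation h a u v) (hh : Continuous h) (ha : 0 < a) (p : ℝ)
    {x t y : ℝ} (hxt : x < t) (hty : t < y) (ht : h (u t) ≠ 0) :
    oscillatorEnergy h p (u x, v x) < oscillatorEnergy h p (u y, v y) := by
  have hmono := H.monotone_energy hh ha.le p
  refine lt_of_le_of_ne (hmono (hxt.trans hty).le) fun heq => ht ?_
  have hconst : ∀ s ∈ Set.Ioo x y,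
      oscillatorEnergy h p (u s, v s) = oscillatorEnergy h p (u x, v x) := fun s hs =>
    le_antisymm ((hmono hs.2.le).trans heq.ge) (hmono hs.1.le)
  have hv : ∀ s ∈ Set.Ioo x y, v s = 0 := fun s hs => by
    have hzero : a * v s ^ 2 = 0 := (H.hasDerivAt_energy hh p s).unique <|
      (hasDerivAt_const s _).congr_of_eventuallyEq
        (Filter.mem_of_superset (Ioo_mem_nhds hs.1 hs.2) hconst)
    simpa [ha.ne'] using hzero
  have hv' : h (u t) + a * v t = 0 := (H.hasDerivAt_snd t).unique <|
    (hasDerivAt_const t 0).congr_of_eventuallyEq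
      (Filter.mem_of_superset (Ioo_mem_nhds hxt hty) hv)
  simpa [hv t ⟨hxt, hty⟩] using hv'

theorem tendsto_snd_atTop (H : IsOscillation h a u v) (hh : Continuous h) (ha : a ≠ 0)
    {S : Set (ℝ × ℝ)} (hS : IsCompact S) (hmem : ∀ y, (u y, v y) ∈ S) :
    Tendsto v atTop (𝓝 0) := by
  have hfield : Continuous (oscillatorField h a) := by unfold oscillatorField; fun_prop
  have hrate : ∀ y,
      HasDerivAt (fun y => a⁻¹ * oscillatorEnergy h 0 (u y, v y)) (v y ^ 2) y := fun y =>
    ((H.hasDerivAt_energy hh 0 y).const_mul a⁻¹).congr_deriv (inv_mul_cancel_left₀ ha _)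
  have hsq : Tendsto (fun y => v y ^ 2) atTop (𝓝 0) :=
    tendsto_deriv_comp_zero_of_mem_isCompact (isOscillation_iff_isIntegralCurve.1 H) hS
      hfield.continuousOn hmem (L := fun x => a⁻¹ * oscillatorEnergy h 0 x)
      (D := fun x => x.2 ^ 2) (continuous_const.mul (continuous_oscillatorEnergy hh 0)).continuousOn
      (by fun_prop) hrate fun _ => sq_nonneg _
  rw [tendsto_zero_iff_abs_tendsto_zero]
  simpa [Function.comp_def, Real.sqrt_sq_eq_abs] using hsq.sqrt

theorem tendsto_comp_fst_atTop (H : IsOscillation h a u v) (hh : Continuous h) (ha : a ≠ 0)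
    {S : Set (ℝ × ℝ)} (hS : IsCompact S) (hmem : ∀ y, (u y, v y) ∈ S) :
    Tendsto (fun y => h (u y)) atTop (𝓝 0) := by
  have hv := H.tendsto_snd_atTop hh ha hS hmem
  have hfield : Continuous (oscillatorField h a) := by unfold oscillatorField; fun_prop
  have hv' : Tendsto (fun y => h (u y) + a * v y) atTop (𝓝 0) :=
    tendsto_zero_of_hasDerivAt_of_uniformContinuous H.hasDerivAt_snd
      (uniformContinuous_comp_of_mem_isCompact (isOscillation_iff_isIntegralCurve.1 H) hS
        hfield.continuousOn hmem (F := fun x => h x.1 + a * x.2) (by fun_prop)) hv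
  simpa using hv'.sub (hv.const_mul a)

theorem tendsto_atTop (H : IsOscillation h a u v) (hh : Continuous h) (ha : a ≠ 0)
    {S : Set (ℝ × ℝ)} (hS : IsCompact S) (hmem : ∀ y, (u y, v y) ∈ S) {T : Set ℝ}
    (hT : IsCompact T) (huT : ∀ᶠ y in atTop, u y ∈ T) (hzero : ∀ x ∈ T, h x = 0 → x = p) :
    Tendsto u atTop (𝓝 p) ∧ Tendsto v atTop (𝓝 0) := by
  refine ⟨hT.tendsto_nhds_of_unique_mapClusterPt huT fun x hxT hx => hzero x hxT ?_,
    H.tendsto_snd_atTop hh ha hS hmem⟩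
  have hcluster : ClusterPt (h x) (map (fun y => h (u y)) atTop) :=
    hx.continuousAt_comp hh.continuousAt
  exact eq_of_nhds_neBot (hcluster.mono (H.tendsto_comp_fst_atTop hh ha hS hmem)).neBot

theorem tendsto_atBot (H : IsOscillation h a u v) (hh : Continuous h) (ha : a ≠ 0)
    {S : Set (ℝ × ℝ)} (hS : IsCompact S) (hmem : ∀ y, (u y, v y) ∈ S) {T : Set ℝ}
    (hT : IsCompact T) (huT : ∀ᶠ y in atBot, u y ∈ T) (hzero : ∀ x ∈ T, h x = 0 → x = p) :
    Tendsto u atBot (𝓝 p) ∧ Tendsto v atBot (𝓝 0) := by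
  have hflip : Continuous fun x : ℝ × ℝ => (x.1, -x.2) := by fun_prop
  obtain ⟨hu, hv⟩ := H.comp_neg.tendsto_atTop hh (neg_ne_zero.2 ha) (hS.image hflip)
    (fun y => ⟨_, hmem (-y), rfl⟩) hT (tendsto_neg_atTop_atBot.eventually huT) hzero
  exact ⟨by simpa [Function.comp_def] using hu.comp tendsto_neg_atBot_atTop,
    by simpa [Function.comp_def] using (hv.comp tendsto_neg_atBot_atTop).neg⟩

theorem snd_neg_of_le (H : IsOscillation h a u v) (hh : ∀ x, h x ≤ 0) {x y : ℝ} (hxy : x ≤ y)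
    (hx : v x < 0) : v y < 0 := by
  have hderiv : ∀ t, HasDerivAt (fun t => v t * Real.exp (-a * t))
      (h (u t) * Real.exp (-a * t)) t := fun t => by
    refine ((H.hasDerivAt_snd t).mul ((hasDerivAt_id t).const_mul (-a)).exp).congr_deriv ?_
    simp only [id_eq]
    ring
  have hanti : Antitone fun t => v t * Real.exp (-a * t) :=
    antitone_of_hasDerivAt_nonpos hderiv fun t =>
      mul_nonpos_of_nonpos_of_nonneg (hh _) (Real.exp_pos _).le
  exact neg_of_mul_neg_left ((hanti hxy).trans_lt (mul_neg_of_neg_of_pos hx (Real.exp_pos _)))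
    (Real.exp_pos _).le

end IsOscillation

theorem intervalIntegral_nonpos_of_eq_zero_Ici (hh : ∀ x, h x ≤ 0) (hp : ∀ x ≥ p, h x = 0)
    (x : ℝ) : ∫ t in x..p, h t ≤ 0 := by
  rcases le_total x p with hxp | hpx
  · simpa using intervalIntegral.integral_nonneg (f := fun t => -h t) hxp fun t _ =>
      neg_nonneg.2 (hh t)
  · rw [intervalIntegral.integral_symm, intervalIntegral.integral_zero_ae, neg_zero]
    exact Eventually.of_forall fun t ht => hp t (Set.uIoc_of_le hpx ▸ ht).1.le

theorem isCompact_setOf_oscillatorEnergy_le (hh : Continuous h) (p b c e : ℝ) :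
    IsCompact {x : ℝ × ℝ | x.1 ∈ Set.Icc b c ∧ oscillatorEnergy h p x ≤ e} := by
  have hcont := continuous_oscillatorEnergy hh p
  obtain ⟨C, hC⟩ := isCompact_Icc.exists_bound_of_continuousOn (s := Set.Icc b c)
    (hcont.comp (Continuous.prodMk_left 0)).continuousOn
  refine ((isCompact_Icc (a := b) (b := c)).prod
    (isCompact_Icc (a := -(|e| + C + 1)) (b := |e| + C + 1))).of_isClosed_subset
    ((isClosed_Icc.preimage continuous_fst).inter (isClosed_le hcont continuous_const)) ?_
  rintro ⟨u, v⟩ ⟨hu, hE⟩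
  have hpotential := (abs_le.1 (hC u hu)).1
  simp only [oscillatorEnergy, Function.comp_apply] at hE hpotential
  refine ⟨hu, abs_le.1 ?_⟩
  nlinarith [sq_abs v, sq_nonneg (|v| - 1), le_abs_self e]

namespace IsOscillation

theorem snd_nonneg_of_energy_pos (H : IsOscillation h a u v) (hcont : Continuous h) (ha : 0 ≤ a)
    (hh : ∀ x, h x ≤ 0) (hp : ∀ x ≥ p, h x = 0) {t : ℝ} (hv : 0 < v t)
    (hE : 0 < oscillatorEnergy h p (u t, v t)) (y : ℝ) : 0 ≤ v y := by
  by_contra! hy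
  rcases le_total y t with hyt | hty
  · exact hv.not_gt (H.snd_neg_of_le hh hyt hy)
  · obtain ⟨s, hs, hvs⟩ := intermediate_value_Icc' hty H.continuous_snd.continuousOn
      (Set.mem_Icc.2 ⟨hy.le, hv.le⟩)
    have hEs := hE.trans_le (H.monotone_energy hcont ha p hs.1)
    have hint := intervalIntegral_nonpos_of_eq_zero_Ici hh hp (u s)
    simp only [oscillatorEnergy, hvs] at hEs
    linarith

theorem fst_lt_of_energy_nonpos (H : IsOscillation h a u v) (hh : LipschitzWith K h)
    (hp : h p = 0) {s y : ℝ} (hsy : s ≤ y) (hs : u s < p)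
    (hE : ∀ y ≥ s, oscillatorEnergy h p (u y, v y) ≤ 0) : u y < p := by
  by_contra! hy
  obtain ⟨t, ht, hut⟩ := intermediate_value_Icc hsy H.continuous_fst.continuousOn
    (Set.mem_Icc.2 ⟨hs.le, hy⟩)
  have hvt : v t = 0 := by
    have hEt := hE t ht.1
    simp only [oscillatorEnergy, hut, intervalIntegral.integral_same] at hEt
    nlinarith
  exact hs.ne (H.eq_const_of_eq_zero hh.lipschitzOnWith (fun _ => Set.mem_univ _) hp hut hvt s)

theorem mem_Ioo_of_energy_neg (H : IsOscillation h a u v) {l t : ℝ}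
    (hE : ∀ y, oscillatorEnergy h p (u y, v y) < 0) (hl : 0 ≤ ∫ x in l..p, h x)
    (ht : u t ∈ Set.Ioo l p) (y : ℝ) : u y ∈ Set.Ioo l p := by
  have hne : ∀ c, 0 ≤ ∫ x in c..p, h x → ∀ y, u y ≠ c := by
    rintro _ hc y rfl
    have hEy := hE y
    simp only [oscillatorEnergy] at hEy
    nlinarith [sq_nonneg (v y)]
  have hivt : ∀ {c}, (∃ s, u s ≤ c) → (∃ s, c ≤ u s) → ∃ s, u s = c :=
    mem_range_of_exists_le_of_exists_ge H.continuous_fst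
  constructor
  · by_contra! hy
    obtain ⟨s, hs⟩ := hivt ⟨y, hy⟩ ⟨t, ht.1.le⟩
    exact hne l hl s hs
  · by_contra! hy
    obtain ⟨s, hs⟩ := hivt ⟨t, ht.2.le⟩ ⟨y, hy⟩
    exact hne p (by simp) s hs

end IsOscillation

-- The initial velocities for which the orbit turns back and those for which it passes `p` with
-- positive energy are disjoint nonempty open sets, so they do not exhaust the line.
theorem exists_isOscillation_snd_nonneg (hh : LipschitzWith K h) (ha : 0 ≤ a)
    (hneg : ∀ x, h x ≤ 0) (hp : ∀ x ≥ p, h x = 0) (u₀ : ℝ) :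
    ∃ u v, IsOscillation h a u v ∧ u 0 = u₀ ∧
      ∀ y ≥ 0, 0 ≤ v y ∧ oscillatorEnergy h p (u y, v y) ≤ 0 := by
  choose U V hU₀ hV₀ H using exists_isOscillation hh a u₀
  have hE := continuous_oscillatorEnergy hh.continuous p
  have hcont : ∀ y ≥ 0, Continuous fun c => (U c y, V c y) := fun y hy =>
    continuous_integralCurve_apply (lipschitzWith_oscillatorField hh a)
      (fun c => isOscillation_iff_isIntegralCurve.1 (H c)) hy
      (by simp only [hU₀, hV₀]; fun_prop)
  set turning : Set ℝ := ⋃ y ≥ (0 : ℝ), {c | V c y < 0}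
  set passing : Set ℝ :=
    ⋃ y ≥ (0 : ℝ), {c | 0 < V c y ∧ 0 < oscillatorEnergy h p (U c y, V c y)}
  have hturning : IsOpen turning := isOpen_biUnion fun y hy =>
    isOpen_lt (hcont y hy).snd continuous_const
  have hpassing : IsOpen passing := isOpen_biUnion fun y hy =>
    (isOpen_lt continuous_const (hcont y hy).snd).inter
      (isOpen_lt continuous_const (hE.comp (hcont y hy)))
  have hturning' : turning.Nonempty := ⟨-1, Set.mem_iUnion₂.2 ⟨0, le_rfl, by simp [hV₀]⟩⟩
  have hpassing' : passing.Nonempty := by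
    set J := ∫ t in u₀..p, h t with hJ
    refine ⟨2 * |J| + 1, Set.mem_iUnion₂.2 ⟨0, le_rfl, ?_⟩⟩
    simp only [Set.mem_ofPred_eq, oscillatorEnergy, hU₀, hV₀, ← hJ]
    constructor <;> nlinarith [abs_nonneg J, neg_abs_le J]
  obtain ⟨c, hc⟩ : ∃ c, c ∉ turning ∪ passing := by
    by_contra! hcover
    obtain ⟨c, hc, hc'⟩ := nonempty_inter hturning hpassing (Set.eq_univ_of_forall hcover)
      hturning' hpassing'
    obtain ⟨⟨y, -, hy⟩, ⟨t, -, ht, ht'⟩⟩ := Set.mem_iUnion₂.1 hc, Set.mem_iUnion₂.1 hc'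
    exact hy.not_ge ((H c).snd_nonneg_of_energy_pos hh.continuous ha hneg hp ht ht' y)
  refine ⟨U c, V c, H c, hU₀ c, fun y hy => ?_⟩
  simp only [turning, passing, Set.mem_union, Set.mem_iUnion, Set.mem_ofPred_eq, not_or, not_exists,
    not_and, not_lt] at hc
  refine ⟨hc.1 y hy, (hc.1 y hy).eq_or_lt.elim (fun hv => ?_) (hc.2 y hy)⟩
  simpa [oscillatorEnergy, ← hv] using intervalIntegral_nonpos_of_eq_zero_Ici hneg hp (U c y)

theorem lipschitzWith_IccExtend_domRestrict {b c : ℝ} (hbc : b ≤ c)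
    (hg : LipschitzOnWith K g (Set.Icc b c)) :
    LipschitzWith K (Set.IccExtend hbc ((Set.Icc b c).domRestrict g)) :=
  mul_one K ▸ hg.to_restrict.comp (LipschitzWith.projIcc hbc)

theorem oscillatorEnergy_congr {x : ℝ × ℝ} (hgh : Set.EqOn g h (Set.uIcc x.1 p)) :
    oscillatorEnergy g p x = oscillatorEnergy h p x := by
  simp only [oscillatorEnergy, intervalIntegral.integral_congr hgh]

theorem exists_isOscillation_mem_Ico (hh : LipschitzWith K h) (ha : 0 ≤ a) {c : ℝ} (hcp : c < p)
    (hneg : ∀ x ∈ Set.Ico c p, h x ≤ 0) (hp : h p = 0) :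
    ∃ u v, IsOscillation h a u v ∧ u 0 = c ∧
      ∀ y ≥ 0, u y ∈ Set.Ico c p ∧ oscillatorEnergy h p (u y, v y) ≤ 0 := by
  set k := Set.IccExtend hcp.le ((Set.Icc c p).domRestrict h)
  have hk : LipschitzWith K k := lipschitzWith_IccExtend_domRestrict hcp.le hh.lipschitzOnWith
  have hkh : Set.EqOn k h (Set.Icc c p) := fun x hx => Set.IccExtend_of_mem _ _ hx
  have hkneg : ∀ x, k x ≤ 0 := fun x => by
    have hx := (Set.projIcc c p hcp.le x).2
    exact hx.2.eq_or_lt.elim (fun hxp => (congrArg h hxp).trans hp |>.le)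
      fun hxp => hneg _ ⟨hx.1, hxp⟩
  have hkp : ∀ x ≥ p, k x = 0 := fun x hx => (Set.IccExtend_of_right_le _ _ hx).trans hp
  obtain ⟨w, z, H, hw₀, hwz⟩ := exists_isOscillation_snd_nonneg hk ha hkneg hkp c
  have hwp : ∀ y ≥ 0, w y < p := fun y hy =>
    H.fst_lt_of_energy_nonpos hk (hkp p le_rfl) hy (hw₀ ▸ hcp) fun t ht => (hwz t ht).2
  have hwmono : MonotoneOn w (Set.Ici 0) := monotoneOn_of_deriv_nonneg (convex_Ici 0)
    H.continuous_fst.continuousOn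
    (fun y _ => (H.hasDerivAt_fst y).differentiableAt.differentiableWithinAt)
    fun y hy => (H.hasDerivAt_fst y).deriv ▸ (hwz y (interior_subset hy)).1
  have hw : ∀ y ≥ 0, w y ∈ Set.Ico c p := fun y hy =>
    ⟨hw₀ ▸ hwmono Set.self_mem_Ici hy hy, hwp y hy⟩
  obtain ⟨u, v, hu₀, hv₀, Huv⟩ := exists_isOscillation hh a c (z 0)
  refine ⟨u, v, Huv, hu₀, fun y hy => ?_⟩
  obtain ⟨huw, hvz⟩ := Huv.eqOn_Ici H hh
    (fun t ht => hkh (Set.Ico_subset_Icc_self (hw t ht))) (hu₀.trans hw₀.symm) hv₀ hy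
  rw [huw, hvz, oscillatorEnergy_congr (hkh.symm.mono _)]
  · exact ⟨hw y hy, (hwz y hy).2⟩
  · exact Set.uIcc_subset_Icc (Set.Ico_subset_Icc_self (hw y hy)) ⟨hcp.le, le_rfl⟩

theorem exists_isOscillation_energy_neg (hh : LipschitzWith K h) (ha : 0 < a) {c : ℝ} (hcp : c < p)
    (hneg : ∀ x ∈ Set.Ico c p, h x < 0) (hp : h p = 0) :
    ∃ u v, IsOscillation h a u v ∧ u 0 = c ∧ (∀ y ≥ 0, u y ∈ Set.Ico c p) ∧
      ∀ y, oscillatorEnergy h p (u y, v y) < 0 := by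
  obtain ⟨u, v, H, hu₀, huv⟩ :=
    exists_isOscillation_mem_Ico hh ha.le hcp (fun x hx => (hneg x hx).le) hp
  have hE : ∀ y ≥ 0, oscillatorEnergy h p (u y, v y) < 0 := fun y hy =>
    (H.energy_lt_energy hh.continuous ha p (lt_add_one y) (lt_add_one (y + 1))
      (hneg _ (huv (y + 1) (by linarith)).1).ne).trans_le (huv _ (by linarith)).2
  refine ⟨u, v, H, hu₀, fun y hy => (huv y hy).1, fun y => ?_⟩
  rcases le_total 0 y with hy | hy
  · exact hE y hy
  · exact (H.monotone_energy hh.continuous ha.le p hy).trans_lt (hE 0 le_rfl)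

theorem exists_heteroclinic_of_lipschitzWith (hh : LipschitzWith K h) (ha : 0 < a) {l : ℝ}
    (hlm : l < m) (hmp : m < p) (hp : h p = 0) (hpos : ∀ x ∈ Set.Ico l m, 0 < h x)
    (hneg : ∀ x ∈ Set.Ioo m p, h x < 0) (hlp : 0 ≤ ∫ x in l..p, h x) :
    ∃ u v, IsOscillation h a u v ∧ (∀ y, u y ∈ Set.Ioo l p) ∧
      (Tendsto u atBot (𝓝 m) ∧ Tendsto v atBot (𝓝 0)) ∧
      Tendsto u atTop (𝓝 p) ∧ Tendsto v atTop (𝓝 0) := by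
  obtain ⟨c, hmc, hcp⟩ := exists_between hmp
  obtain ⟨u, v, H, hu₀, hu, hE⟩ := exists_isOscillation_energy_neg hh ha hcp
    (fun x hx => hneg x ⟨hmc.trans_le hx.1, hx.2⟩) hp
  have hlu : ∀ y, u y ∈ Set.Ioo l p :=
    H.mem_Ioo_of_energy_neg hE hlp (t := 0) (hu₀ ▸ ⟨hlm.trans hmc, hcp⟩)
  have hS := isCompact_setOf_oscillatorEnergy_le hh.continuous p l p 0
  have hmem : ∀ y, (u y, v y) ∈ {x : ℝ × ℝ | x.1 ∈ Set.Icc l p ∧ oscillatorEnergy h p x ≤ 0} :=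
    fun y => ⟨Set.Ioo_subset_Icc_self (hlu y), (hE y).le⟩
  have hzero : ∀ x ∈ Set.Icc l p, h x = 0 → x = m ∨ x = p := by
    intro x hx hx₀
    by_contra! hne
    rcases hne.1.lt_or_gt with hxm | hmx
    · exact (hpos x ⟨hx.1, hxm⟩).ne' hx₀
    · exact (hneg x ⟨hmx, hx.2.lt_of_ne hne.2⟩).ne hx₀
  refine ⟨u, v, H, hlu, ?_, ?_⟩
  · refine H.tendsto_atBot hh.continuous ha.ne' hS hmem
      ((isCompact_setOf_oscillatorEnergy_le hh.continuous p l p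
        (oscillatorEnergy h p (u 0, v 0))).image continuous_fst) ?_ ?_
    · filter_upwards [eventually_le_atBot 0] with y hy
      exact ⟨(u y, v y), ⟨(hmem y).1, H.monotone_energy hh.continuous ha.le p hy⟩, rfl⟩
    · rintro _ ⟨x, ⟨hx, hEx⟩, rfl⟩ hx₀
      refine (hzero _ hx hx₀).resolve_right fun hxp => ?_
      have hEp := hEx.trans_lt (hE 0)
      simp only [oscillatorEnergy, hxp, intervalIntegral.integral_same] at hEp
      nlinarith [sq_nonneg x.2]
  · refine H.tendsto_atTop hh.continuous ha.ne' hS hmem (isCompact_Icc (a := c) (b := p)) ?_ ?_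
    · filter_upwards [eventually_ge_atTop 0] with y hy using Set.Ico_subset_Icc_self (hu y hy)
    · exact fun x hx hx₀ =>
        (hzero x ⟨(hlm.trans hmc).le.trans hx.1, hx.2⟩ hx₀).resolve_left (hmc.trans_le hx.1).ne'

theorem exists_heteroclinic {l : ℝ} (hg : LipschitzOnWith K g (Set.Icc l p)) (ha : 0 < a)
    (hlm : l < m) (hmp : m < p) (hp : g p = 0) (hpos : ∀ x ∈ Set.Ico l m, 0 < g x)
    (hneg : ∀ x ∈ Set.Ioo m p, g x < 0) (hlp : 0 ≤ ∫ x in l..p, g x) :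
    ∃ u v, IsOscillation g a u v ∧ (∀ y, u y ∈ Set.Ioo l p) ∧
      (Tendsto u atBot (𝓝 m) ∧ Tendsto v atBot (𝓝 0)) ∧
      Tendsto u atTop (𝓝 p) ∧ Tendsto v atTop (𝓝 0) := by
  have hl : l ≤ p := (hlm.trans hmp).le
  set h := Set.IccExtend hl ((Set.Icc l p).domRestrict g)
  have hhg : Set.EqOn h g (Set.Icc l p) := fun x hx => Set.IccExtend_of_mem _ _ hx
  have hp' : h p = 0 := (hhg ⟨hl, le_rfl⟩).trans hp
  have hpos' : ∀ x ∈ Set.Ico l m, 0 < h x := fun x hx =>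
    (hpos x hx).trans_eq (hhg ⟨hx.1, hx.2.le.trans hmp.le⟩).symm
  have hneg' : ∀ x ∈ Set.Ioo m p, h x < 0 := fun x hx =>
    (hhg ⟨hlm.le.trans hx.1.le, hx.2.le⟩).trans_lt (hneg x hx)
  have hlp' : 0 ≤ ∫ x in l..p, h x :=
    hlp.trans_eq (intervalIntegral.integral_congr (Set.uIcc_of_le hl ▸ hhg)).symm
  obtain ⟨u, v, H, hu, hlim⟩ := exists_heteroclinic_of_lipschitzWith
    (lipschitzWith_IccExtend_domRestrict hl hg) ha hlm hmp hp' hpos' hneg' hlp'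
  exact ⟨u, v, H.congr fun y => (hhg (Set.Ioo_subset_Icc_self (hu y))).symm, hu, hlim⟩

-- Otherwise `r' / (1 + r²) ≤ -min 1 d`, although the left side is the derivative of the bounded
-- function `arctan r`.
theorem exists_neg_add_sq_lt_of_hasDerivAt {r r' : ℝ → ℝ} {d : ℝ} (hd : 0 < d) (Y : ℝ)
    (hr : ∀ y ≤ Y, HasDerivAt r (r' y) y) : ∃ y ≤ Y, -(d + r y ^ 2) < r' y := by
  by_contra! hle
  set c := min 1 d
  have hc : 0 < c := lt_min one_pos hd
  have hφ : ∀ y ∈ Set.Iic Y, HasDerivAt (fun y => Real.arctan (r y) + c * y)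
      (1 / (1 + r y ^ 2) * r' y + c) y := fun y hy =>
    ((hr y hy).arctan.add ((hasDerivAt_id y).const_mul c)).congr_deriv (by rw [mul_one])
  have hφ' : ∀ y ∈ Set.Iic Y, 1 / (1 + r y ^ 2) * r' y + c ≤ 0 := fun y hy => by
    have hrate : 1 / (1 + r y ^ 2) * r' y ≤ -c := by
      rw [one_div, inv_mul_le_iff₀ (by positivity)]
      nlinarith [hle y hy, min_le_left 1 d, min_le_right 1 d, sq_nonneg (r y)]
    linarith
  have hanti : AntitoneOn (fun y => Real.arctan (r y) + c * y) (Set.Iic Y) :=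
    antitoneOn_of_deriv_nonpos (convex_Iic Y)
      (fun y hy => (hφ y hy).continuousAt.continuousWithinAt)
      (fun y hy => (hφ y (interior_subset hy)).differentiableAt.differentiableWithinAt)
      fun y hy => (hφ y (interior_subset hy)).deriv ▸ hφ' y (interior_subset hy)
  have hX : Y - Real.pi / c ≤ Y := sub_le_self Y (by positivity)
  have hbound := hanti hX Set.self_mem_Iic hX
  simp only [mul_sub, mul_div_cancel₀ Real.pi hc.ne'] at hbound
  linarith [Real.arctan_lt_pi_div_two (r (Y - Real.pi / c)), Real.neg_pi_div_two_lt_arctan (r Y)]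

namespace IsOscillation

-- As long as `u > m`, the shifted ratio `r = v / (u - m) - a / 2` satisfies the Riccati equation
-- `r' = h u / (u - m) + a² / 4 - r²`, where `h u / (u - m)` tends to `deriv h m`.
theorem frequently_fst_le_atBot (H : IsOscillation h a u v) (hh : DifferentiableAt ℝ h m)
    (hm : h m = 0) (hu : Tendsto u atBot (𝓝 m)) (hdisc : a ^ 2 / 4 + deriv h m < 0) :
    ∃ᶠ y in atBot, u y ≤ m := by
  intro hgt
  simp only [not_le] at hgt
  set d := -(a ^ 2 / 4 + deriv h m) / 2 with hd
  have hslope : ∀ᶠ y in atBot, h (u y) / (u y - m) < deriv h m + d := by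
    have hu' : Tendsto u atBot (𝓝[≠] m) :=
      tendsto_nhdsWithin_iff.2 ⟨hu, hgt.mono fun y hy => hy.ne'⟩
    filter_upwards [((hasDerivAt_iff_tendsto_slope.1 hh.hasDerivAt).comp hu').eventually
      (gt_mem_nhds (show deriv h m < deriv h m + d by linarith))] with y hy
    simpa [slope_def_field, hm] using hy
  obtain ⟨Y, hY⟩ := eventually_atBot.1 (hgt.and hslope)
  have hriccati : ∀ y ≤ Y, HasDerivAt (fun y => v y / (u y - m) - a / 2)
      (h (u y) / (u y - m) + a * (v y / (u y - m)) - (v y / (u y - m)) ^ 2) y := fun y hy => by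
    have hne : u y - m ≠ 0 := (sub_pos.2 (hY y hy).1).ne'
    refine (((H.hasDerivAt_snd y).div ((H.hasDerivAt_fst y).sub_const m) hne).sub_const
      (a / 2)).congr_deriv ?_
    field_simp
  obtain ⟨y, hy, hlt⟩ := exists_neg_add_sq_lt_of_hasDerivAt (d := d) (by linarith) Y hriccati
  nlinarith [(hY y hy).2]

theorem not_monotone (H : IsOscillation h a u v) (hh : LipschitzOnWith K h I)
    (hI : ∀ y, u y ∈ I) (hm : h m = 0) (hu : Tendsto u atBot (𝓝 m))
    (hfreq : ∃ᶠ y in atBot, u y ≤ m) {t : ℝ} (ht : u t ≠ m) : ¬ Monotone u := by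
  intro hmono
  obtain ⟨y, hy⟩ := hfreq.exists
  have hconst : ∀ s ≤ y, u s = m := fun s hs =>
    le_antisymm ((hmono hs).trans hy) (hmono.le_of_tendsto hu s)
  have hv : v (y - 1) = 0 := (H.hasDerivAt_fst (y - 1)).unique <|
    (hasDerivAt_const _ m).congr_of_eventuallyEq <| by
      filter_upwards [Iic_mem_nhds (sub_one_lt y)] using hconst
  exact ht (H.eq_const_of_eq_zero hh hI hm (hconst _ (sub_one_lt y).le) hv t)

end IsOscillation

end Oscillator

/-- The force of the oscillator satisfied by `u = log P` when `P' = κ Q` and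
`Q' = f(P) + a Q + κ Q² / P`: the quadratic term in `Q` cancels. -/
noncomputable def logForce (κ : ℝ) (f : ℝ → ℝ) (u : ℝ) : ℝ :=
  κ * f (Real.exp u) * Real.exp (-u)

section Profile

variable {κ a c : ℝ} {f g : ℝ → ℝ} {u v : ℝ → ℝ}

theorem logForce_pos (hκ : 0 < κ) {x : ℝ} (hf : 0 < f (Real.exp x)) : 0 < logForce κ f x := by
  unfold logForce
  positivity

theorem logForce_neg (hκ : 0 < κ) {x : ℝ} (hf : f (Real.exp x) < 0) : logForce κ f x < 0 :=
  mul_neg_of_neg_of_pos (mul_neg_of_pos_of_neg hκ hf) (Real.exp_pos _)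

theorem logForce_log_eq_zero {P : ℝ} (hP : 0 < P) (hf : f P = 0) :
    logForce κ f (Real.log P) = 0 := by
  simp [logForce, Real.exp_log hP, hf]

theorem hasDerivAt_logForce_log {P f' : ℝ} (hP : 0 < P) (hf₀ : f P = 0) (hf : HasDerivAt f f' P) :
    HasDerivAt (logForce κ f) (κ * f') (Real.log P) := by
  have hexp : HasDerivAt (fun u => f (Real.exp u)) (f' * P) (Real.log P) := by
    have hderiv := Real.hasDerivAt_exp (Real.log P)
    rw [Real.exp_log hP] at hderiv
    exact HasDerivAt.comp (Real.log P) (by rwa [Real.exp_log hP]) hderiv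
  refine ((hexp.const_mul κ).mul (hasDerivAt_neg (Real.log P)).exp).congr_deriv ?_
  rw [Real.exp_log hP, hf₀, Real.exp_neg, Real.exp_log hP]
  field_simp
  ring

theorem contDiff_logForce (hf : ContDiffOn ℝ 1 f (Set.Ioi 0)) : ContDiff ℝ 1 (logForce κ f) :=
  (contDiff_const.mul (hf.comp_contDiff Real.contDiff_exp Real.exp_pos)).mul contDiff_neg.exp

theorem eventually_le_logForce (hκ : 0 < κ) (hc : 0 < c) (hf : ∀ᶠ P in 𝓝[>] 0, c ≤ f P) :
    ∀ᶠ x in atBot, κ * c ≤ logForce κ f x := by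
  filter_upwards [Real.tendsto_exp_atBot_nhdsGT.eventually hf, eventually_le_atBot 0] with x hx hx₀
  calc κ * c ≤ κ * f (Real.exp x) * 1 := by rw [mul_one]; gcongr
    _ ≤ logForce κ f x := by
      unfold logForce
      gcongr
      · exact mul_nonneg hκ.le (hc.le.trans hx)
      · exact Real.one_le_exp (neg_nonneg.2 hx₀)

theorem exists_lt_intervalIntegral_nonneg (hg : Continuous g) (hc : 0 < c)
    (hev : ∀ᶠ x in atBot, c ≤ g x) (m p : ℝ) : ∃ l < m, 0 ≤ ∫ x in l..p, g x := by
  obtain ⟨Y, hY⟩ := eventually_atBot.1 hev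
  set b := min Y m
  set J := ∫ x in b..p, g x
  set l := b - (|J| / c + 1)
  have hlb : l ≤ b := sub_le_self b (by positivity)
  refine ⟨l, (sub_lt_self b (by positivity)).trans_le (min_le_right _ _), ?_⟩
  have hleft : c * (b - l) ≤ ∫ x in l..b, g x := by
    have hmono := intervalIntegral.integral_mono_on (μ := MeasureTheory.volume) hlb
      intervalIntegrable_const (hg.intervalIntegrable l b)
      fun x hx => hY x (hx.2.trans (min_le_left _ _))
    rwa [intervalIntegral.integral_const, smul_eq_mul, mul_comm] at hmono
  have hJ : c * (b - l) = |J| + c := by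
    rw [sub_sub_cancel, mul_add, mul_div_cancel₀ _ hc.ne', mul_one]
  rw [← intervalIntegral.integral_add_adjacent_intervals (hg.intervalIntegrable l b)
    (hg.intervalIntegrable b p)]
  linarith [neg_abs_le J]

theorem not_antitone_of_tendsto {b d : ℝ} (hbot : Tendsto u atBot (𝓝 b))
    (htop : Tendsto u atTop (𝓝 d)) (hbd : b < d) : ¬ Antitone u := fun hu =>
  hbd.not_ge ((hu.le_of_tendsto htop 0).trans (hu.ge_of_tendsto hbot 0))

theorem IsOscillation.hasDerivAt_exp_fst (H : IsOscillation (logForce κ f) a u v) (hκ : κ ≠ 0)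
    (y : ℝ) : HasDerivAt (fun y => Real.exp (u y)) (κ * (Real.exp (u y) * v y / κ)) y :=
  (H.hasDerivAt_fst y).exp.congr_deriv (mul_div_cancel₀ _ hκ).symm

theorem IsOscillation.hasDerivAt_exp_fst_mul_snd (H : IsOscillation (logForce κ f) a u v)
    (hκ : κ ≠ 0) (y : ℝ) :
    HasDerivAt (fun y => Real.exp (u y) * v y / κ)
      (f (Real.exp (u y)) + a * (Real.exp (u y) * v y / κ) +
        κ * (Real.exp (u y) * v y / κ) ^ 2 / Real.exp (u y)) y := by
  refine (((H.hasDerivAt_fst y).exp.mul (H.hasDerivAt_snd y)).div_const κ).congr_deriv ?_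
  rw [logForce, Real.exp_neg]
  field_simp
  ring

theorem exists_heteroclinic_profile {Pm Pp : ℝ} (hκ : 0 < κ) (ha : 0 < a) (hPm : 0 < Pm)
    (hPmPp : Pm < Pp) (hf : ContDiffOn ℝ 1 f (Set.Ioi 0)) (hfm : f Pm = 0) (hfp : f Pp = 0)
    (hpos : ∀ P ∈ Set.Ioo 0 Pm, 0 < f P) (hneg : ∀ P ∈ Set.Ioo Pm Pp, f P < 0) (hc : 0 < c)
    (hfc : ∀ᶠ P in 𝓝[>] 0, c ≤ f P) :
    ∃ P Q : ℝ → ℝ, (∀ y, 0 < P y) ∧ (∀ y, HasDerivAt P (κ * Q y) y) ∧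
      (∀ y, HasDerivAt Q (f (P y) + a * Q y + κ * Q y ^ 2 / P y) y) ∧
      Tendsto (fun y => (P y, Q y)) atBot (𝓝 (Pm, 0)) ∧
      Tendsto (fun y => (P y, Q y)) atTop (𝓝 (Pp, 0)) ∧
      (a ^ 2 / 4 + κ * deriv f Pm < 0 → ¬ Monotone P ∧ ¬ Antitone P) := by
  have hPp := hPm.trans hPmPp
  have hg : ContDiff ℝ 1 (logForce κ f) := contDiff_logForce hf
  have hm := logForce_log_eq_zero (κ := κ) hPm hfm
  have hlog := Real.log_lt_log hPm hPmPp
  obtain ⟨l, hlm, hlp⟩ := exists_lt_intervalIntegral_nonneg hg.continuous (mul_pos hκ hc)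
    (eventually_le_logForce hκ hc hfc) (Real.log Pm) (Real.log Pp)
  obtain ⟨K, hK⟩ := LocallyLipschitzOn.exists_lipschitzOnWith_of_compact
    (isCompact_Icc (a := l) (b := Real.log Pp)) hg.locallyLipschitz.locallyLipschitzOn
  obtain ⟨u, v, H, hu, ⟨hubot, hvbot⟩, hutop, hvtop⟩ := exists_heteroclinic hK ha hlm hlog
    (logForce_log_eq_zero hPp hfp)
    (fun x hx => logForce_pos hκ (hpos _ ⟨Real.exp_pos x, (Real.lt_log_iff_exp_lt hPm).1 hx.2⟩))
    (fun x hx => logForce_neg hκ (hneg _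
      ⟨(Real.log_lt_iff_lt_exp hPm).1 hx.1, (Real.lt_log_iff_exp_lt hPp).1 hx.2⟩)) hlp
  have hlim : ∀ {F : Filter ℝ} {R : ℝ}, 0 < R → Tendsto u F (𝓝 (Real.log R)) →
      Tendsto v F (𝓝 0) →
      Tendsto (fun y => (Real.exp (u y), Real.exp (u y) * v y / κ)) F (𝓝 (R, 0)) := by
    intro F R hR huF hvF
    have hexp := Real.exp_log hR ▸ (Real.continuous_exp.tendsto _).comp huF
    simpa using hexp.prodMk_nhds ((hexp.mul hvF).div_const κ)
  refine ⟨_, _, fun y => Real.exp_pos (u y), H.hasDerivAt_exp_fst hκ.ne',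
    H.hasDerivAt_exp_fst_mul_snd hκ.ne', hlim hPm hubot hvbot, hlim hPp hutop hvtop,
    fun hdisc => ?_⟩
  have hderiv : HasDerivAt (logForce κ f) (κ * deriv f Pm) (Real.log Pm) :=
    hasDerivAt_logForce_log hPm hfm
      ((hf.differentiableOn one_ne_zero).hasDerivAt (Ioi_mem_nhds hPm))
  have hfreq := H.frequently_fst_le_atBot hderiv.differentiableAt hm hubot
    (by rwa [hderiv.deriv])
  obtain ⟨t, ht⟩ := (hutop.eventually_ne hlog.ne').exists
  exact ⟨fun hP => H.not_monotone hK (fun y => Set.Ioo_subset_Icc_self (hu y)) hm hubot hfreq ht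
      fun x y hxy => Real.exp_le_exp.1 (hP hxy),
    not_antitone_of_tendsto (hlim hPm hubot hvbot).fst_nhds (hlim hPp hutop hvtop).fst_nhds hPmPp⟩

end Profile

section Convex

variable {s : Set ℝ} {q : ℝ → ℝ} {b c x : ℝ}

theorem pos_of_strictConvexOn_of_lt_roots (hq : StrictConvexOn ℝ s q) (hx : x ∈ s) (hc : c ∈ s)
    (hxb : x < b) (hbc : b < c) (hqb : q b = 0) (hqc : q c = 0) : 0 < q x := by
  have hslope := hq.slope_strict_mono_adjacent hx hc hxb hbc
  rw [hqb, hqc, zero_sub, sub_zero, zero_div] at hslope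
  exact neg_neg_iff_pos.1 (neg_of_div_neg_left hslope (sub_pos.2 hxb).le)

theorem neg_of_strictConvexOn_of_mem_Ioo_roots (hq : StrictConvexOn ℝ s q) (hb : b ∈ s)
    (hc : c ∈ s) (hx : x ∈ Set.Ioo b c) (hqb : q b = 0) (hqc : q c = 0) : q x < 0 := by
  have hbc := hx.1.trans hx.2
  simpa [hqb, hqc] using hq.lt_on_openSegment hb hc hbc.ne (openSegment_eq_Ioo hbc ▸ hx)

end Convex

/-- The function `f(P) = P^γ - C₁ + C₂ / P` whose positive roots are the end states of the
travelling wave. -/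
noncomputable def profileForce (γ C₁ C₂ P : ℝ) : ℝ :=
  P ^ γ - C₁ + C₂ / P

section ProfileForce

variable {γ C₁ C₂ P Pm Pp : ℝ}

theorem contDiffOn_profileForce (γ C₁ C₂ : ℝ) :
    ContDiffOn ℝ 1 (profileForce γ C₁ C₂) (Set.Ioi 0) := fun _ hP =>
  have hne := (Set.mem_Ioi.1 hP).ne'
  (((contDiffAt_id.rpow_const_of_ne hne).sub contDiffAt_const).add
    (contDiffAt_const.div contDiffAt_id hne)).contDiffWithinAt

theorem mul_profileForce (hP : 0 < P) :
    P * profileForce γ C₁ C₂ P = P ^ (γ + 1) - C₁ * P + C₂ := by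
  rw [profileForce, Real.rpow_add_one hP.ne']
  field_simp

theorem rpow_add_one_sub_mul_add_eq_zero (hP : 0 < P) (hroot : profileForce γ C₁ C₂ P = 0) :
    P ^ (γ + 1) - C₁ * P + C₂ = 0 := by
  rw [← mul_profileForce hP, hroot, mul_zero]

theorem strictConvexOn_rpow_add_one_sub_mul_add (hγ : 0 < γ) (C₁ C₂ : ℝ) :
    StrictConvexOn ℝ (Set.Ici 0) fun P : ℝ => P ^ (γ + 1) - C₁ * P + C₂ :=
  ((strictConvexOn_rpow (lt_add_of_pos_left 1 hγ)).sub_concaveOn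
    ((LinearMap.mulLeft ℝ C₁).concaveOn (convex_Ici 0))).add_const C₂

theorem profileForce_pos_of_lt_roots (hγ : 0 < γ) (hP : 0 < P) (hPPm : P < Pm) (hPmPp : Pm < Pp)
    (hm : profileForce γ C₁ C₂ Pm = 0) (hp : profileForce γ C₁ C₂ Pp = 0) :
    0 < profileForce γ C₁ C₂ P := by
  have hPm := hP.trans hPPm
  have hPp := hPm.trans hPmPp
  have hpos := pos_of_strictConvexOn_of_lt_roots (strictConvexOn_rpow_add_one_sub_mul_add hγ C₁ C₂)
    hP.le hPp.le hPPm hPmPp (rpow_add_one_sub_mul_add_eq_zero hPm hm)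
    (rpow_add_one_sub_mul_add_eq_zero hPp hp)
  rw [← mul_profileForce hP] at hpos
  exact pos_of_mul_pos_right hpos hP.le

theorem profileForce_neg_of_mem_Ioo_roots (hγ : 0 < γ) (hPm : 0 < Pm) (hP : P ∈ Set.Ioo Pm Pp)
    (hm : profileForce γ C₁ C₂ Pm = 0) (hp : profileForce γ C₁ C₂ Pp = 0) :
    profileForce γ C₁ C₂ P < 0 := by
  have hP₀ := hPm.trans hP.1
  have hPp := hP₀.trans hP.2
  have hneg := neg_of_strictConvexOn_of_mem_Ioo_roots
    (strictConvexOn_rpow_add_one_sub_mul_add hγ C₁ C₂) hPm.le hPp.le hP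
    (rpow_add_one_sub_mul_add_eq_zero hPm hm) (rpow_add_one_sub_mul_add_eq_zero hPp hp)
  rw [← mul_profileForce hP₀] at hneg
  exact neg_of_mul_neg_right hneg hP₀.le

theorem tendsto_profileForce_nhdsGT_zero (hγ : 0 < γ) (hPm : 0 < Pm) (hPmPp : Pm < Pp)
    (hm : profileForce γ C₁ C₂ Pm = 0) (hp : profileForce γ C₁ C₂ Pp = 0) :
    Tendsto (profileForce γ C₁ C₂) (𝓝[>] 0) atTop := by
  have hPp := hPm.trans hPmPp
  have hC₂ : 0 < C₂ := by
    have hpos := pos_of_strictConvexOn_of_lt_roots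
      (strictConvexOn_rpow_add_one_sub_mul_add hγ C₁ C₂) Set.self_mem_Ici hPp.le hPm hPmPp
      (rpow_add_one_sub_mul_add_eq_zero hPm hm) (rpow_add_one_sub_mul_add_eq_zero hPp hp)
    simpa [Real.zero_rpow (by positivity : γ + 1 ≠ 0)] using hpos
  have hrpow : Tendsto (fun P : ℝ => P ^ γ - C₁) (𝓝[>] 0) (𝓝 (0 ^ γ - C₁)) :=
    ((Real.continuous_rpow_const hγ.le).sub continuous_const).continuousWithinAt
  exact hrpow.add_atTop (tendsto_inv_nhdsGT_zero.const_mul_atTop hC₂)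

end ProfileForce

theorem stmt_11_general {γ s μ k Pp Pm C₁ C₂ : ℝ} (hγ : 0 < γ) (hs : s < 0) (hμ : 0 < μ)
    (hk : 0 < k) (hPm : 0 < Pm) (hPmPp : Pm < Pp) (f : ℝ → ℝ)
    (hf : ∀ P : ℝ, f P = P ^ γ - C₁ + C₂ / P) (hroot1 : f Pm = 0) (hroot2 : f Pp = 0) :
    ∃ P Q : ℝ → ℝ,
      (∀ y : ℝ, 0 < P y) ∧
      (∀ y : ℝ, HasDerivAt P (2 / k ^ 2 * Q y) y) ∧
      (∀ y : ℝ, HasDerivAt Q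
        (f (P y) - 2 * μ * s / k ^ 2 * Q y + 2 / k ^ 2 * (Q y) ^ 2 / P y) y) ∧
      Tendsto (fun y => (P y, Q y)) atBot (𝓝 (Pm, 0)) ∧
      Tendsto (fun y => (P y, Q y)) atTop (𝓝 (Pp, 0)) ∧
      (-(s * μ) / k < Real.sqrt (-2 * deriv f Pm) → ¬ Monotone P ∧ ¬ Antitone P) := by
  obtain rfl : f = profileForce γ C₁ C₂ := funext hf
  have ha : 0 < -(2 * μ * s / k ^ 2) :=
    neg_pos.2 (div_neg_of_neg_of_pos (mul_neg_of_pos_of_neg (by positivity) hs) (by positivity))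
  obtain ⟨P, Q, hP, hP', hQ', hbot, htop, hosc⟩ :=
    exists_heteroclinic_profile (by positivity : 0 < 2 / k ^ 2) ha hPm hPmPp
      (contDiffOn_profileForce γ C₁ C₂) hroot1 hroot2
      (fun P hP => profileForce_pos_of_lt_roots hγ hP.1 hP.2 hPmPp hroot1 hroot2)
      (fun P hP => profileForce_neg_of_mem_Ioo_roots hγ hPm hP hroot1 hroot2) one_pos
      ((tendsto_profileForce_nhdsGT_zero hγ hPm hPmPp hroot1 hroot2).eventually_ge_atTop 1)
  refine ⟨P, Q, hP, hP', fun y => (hQ' y).congr_deriv (by ring), hbot, htop,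
    fun hspeed => hosc ?_⟩
  set f' := deriv (profileForce γ C₁ C₂) Pm
  have hsq : (-(s * μ) / k) ^ 2 < -2 * f' :=
    (Real.lt_sqrt (div_nonneg (neg_nonneg.2 (mul_neg_of_neg_of_pos hs hμ).le) hk.le)).1 hspeed
  calc (-(2 * μ * s / k ^ 2)) ^ 2 / 4 + 2 / k ^ 2 * f'
      = ((-(s * μ) / k) ^ 2 - -2 * f') / k ^ 2 := by field_simp; ring
    _ < 0 := div_neg_of_neg_of_pos (sub_neg.2 hsq) (by positivity)

/-- global existence of (possibly oscillatory) traveling wave profiles for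
negative speed `s < 0`: if `F̃₁(ξ) = F(ξ) − (sμξ/k)² − F(P⁺)` is nonpositive on `(0, P⁻)`,
then there is a heteroclinic of `P' = (2/k²)Q̃`, `Q̃' = f(P) − (2μs/k²)Q̃ + (2/k²)Q̃²/P` from
`(P⁻,0)` to `(P⁺,0)`; if in addition `−sμ/k < √(−2f'(P⁻))`, the profile is non-monotone. -/
theorem stmt_11 (γ s μ k Pp Pm C₁ C₂ : ℝ) (hγ : 1 ≤ γ) (hs : s < 0) (hμ : 0 < μ) (hk : 0 < k)
    (hPm : 0 < Pm) (hPmPp : Pm < Pp)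
    (hC₁ : C₁ = (Pp ^ (γ + 1) - Pm ^ (γ + 1)) / (Pp - Pm))
    (hC₂ : C₂ = Pp * Pm * ((Pp ^ γ - Pm ^ γ) / (Pp - Pm)))
    (f F : ℝ → ℝ)
    (hf : ∀ P : ℝ, f P = P ^ γ - C₁ + C₂ / P)
    (hroot1 : f Pm = 0) (hroot2 : f Pp = 0)
    (hF : ∀ P : ℝ, F P = P ^ (γ + 1) / (γ + 1) - C₁ * P + C₂ * Real.log P)
    (hF₁ : ∀ ξ : ℝ, 0 < ξ → ξ < Pm → F ξ - (s * μ * ξ / k) ^ 2 - F Pp ≤ 0) :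
    ∃ P Q : ℝ → ℝ,
      (∀ y : ℝ, 0 < P y) ∧
      (∀ y : ℝ, HasDerivAt P (2 / k ^ 2 * Q y) y) ∧
      (∀ y : ℝ, HasDerivAt Q
        (f (P y) - 2 * μ * s / k ^ 2 * Q y + 2 / k ^ 2 * (Q y) ^ 2 / P y) y) ∧
      Tendsto (fun y => (P y, Q y)) atBot (𝓝 (Pm, 0)) ∧
      Tendsto (fun y => (P y, Q y)) atTop (𝓝 (Pp, 0)) ∧
      (-(s * μ) / k < Real.sqrt (-2 * deriv f Pm) → ¬ Monotone P ∧ ¬ Antitone P) :=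
  stmt_11_general (one_pos.trans_le hγ) hs hμ hk hPm hPmPp f hf hroot1 hroot2
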